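/- Let μ_n be probability measures on A^{V_n} for finite d-regular edge-labeled graphs G_n locally converging to T_d, with μ_n → μ in the local weak* sense for a Γ-invariant measure μ on A^{V(T_d)}. Then limsup_{n→∞} (1/|V_n|) H(μ_n) ≤ H_perc(μ), where H_perc(μ) = ∫_0^1 ∫ H_μ(σ_φ | σ_{S\{φ}}) dθ_p(S) dp is the percolative entropy. -/

import Mathlib

open scoped Classical BigOperators

noncomputable section

/-- Shannon entropy of a finitely supported probability vector (natural log,
with the convention `0 · log 0 = 0`, automatic since `Real.log 0 = 0`). -/
def shEnt {Ω : Type*} [Fintype Ω] (p : Ω → ℝ) : ℝ :=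
  -∑ ω, p ω * Real.log (p ω)

/-- Marginal of a probability vector on `V → A` on the coordinates in `S`. -/
def marg {V A : Type*} [Fintype V] [Fintype A] (μ : (V → A) → ℝ) (S : Finset V) :
    ({x // x ∈ S} → A) → ℝ :=
  fun η => ∑ x : V → A, if (∀ i : S, x i = η i) then μ x else 0

/-- Conditional Shannon entropy `H_μ(σ_v | σ_S)`, via the chain rule
`H(σ_{S ∪ {v}}) - H(σ_S)`. -/
def condEnt {V A : Type*} [Fintype V] [Fintype A] (μ : (V → A) → ℝ) (v : V)
    (S : Finset V) : ℝ :=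
  shEnt (marg μ (insert v S)) - shEnt (marg μ S)


open MeasureTheory Filter

def margM {V A : Type*} [Fintype A] [MeasurableSpace A] (μ : Measure (V → A))
    (S : Finset V) : ({x // x ∈ S} → A) → ℝ :=
  fun η => (μ {x | ∀ i : S, x (i : V) = η i}).toReal

def condEntM {V A : Type*} [Fintype A] [MeasurableSpace A] (μ : Measure (V → A))
    (v : V) (T : Finset V) : ℝ :=
  shEnt (margM μ (insert v T)) - shEnt (margM μ T)

/-- Conditional entropy given a possibly infinite set, via finite exhaustion. -/
def condEntInf {V A : Type*} [Fintype A] [MeasurableSpace A] (μ : Measure (V → A))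
    (v : V) (S : Set V) : ℝ :=
  ⨅ T : {T : Finset V // (T : Set V) ⊆ S}, condEntM μ v (T : Finset V)

/-- Percolative entropy `∫_0^1 ∫ H_μ(σ_φ | σ_{S ∖ {φ}}) dθ_p(S) dp`, with the
root `φ = 1 ∈ Γ` and subsets of `Γ` identified with Boolean configurations. -/
def Hperc {Γ A : Type*} [Group Γ] [Fintype A] [MeasurableSpace A]
    (θ : ℝ → Measure (Γ → Bool)) (μ : Measure (Γ → A)) : ℝ :=
  ∫ p in (0:ℝ)..1, ∫ x : Γ → Bool,
    condEntInf μ (1 : Γ) ({h | x h = true} \ {(1 : Γ)}) ∂(θ p)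

/-- The radius-`r` pull-back/pushforward of `μ_n` at `v`: the law on
`A^{T_d(r)}` of the pull-back name `(σ_{γ_n(g)(v)})_{g ∈ B_r}` when `σ ∼ μ_n`. -/
def pushName {Γ A W : Type*} [Group Γ] [Fintype A] [Fintype W]
    (B : Finset Γ) (γ : Γ →* Equiv.Perm W) (μW : (W → A) → ℝ) (v : W) :
    ({g // g ∈ B} → A) → ℝ :=
  fun η => ∑ x : W → A, if (∀ g : B, x (γ (g : Γ) v) = η g) then μW x else 0

/-- Total variation distance between two probability vectors. -/
def tvDist {Ω : Type*} [Fintype Ω] (ν ν' : Ω → ℝ) : ℝ :=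
  (1/2) * ∑ ω, |ν ω - ν' ω|

/-!
For a Bernoulli(`p`) subset `S` of the vertices, Russo's formula writes the derivative in `p` of
the expected entropy of `σ_S` as a sum over vertices `v` of the expectation of
`H(σ_v | σ_{S ∖ {v}})`. Integrating over `p ∈ [0, 1]`, the entropy of a law on a finite product is
the sum over `v` of its percolative entropies at `v`.

Forgetting all spins outside a window around `v` increases the percolative entropy at `v`, which
is then a continuous function of the law of the window. So at all but `o(|V_n|)` vertices it is at
most that of the window law of `μ`, up to `ε`, and at the remaining ones it is at most `log |A|`.
As the windows grow to cover the tree, the percolative entropy of the window law of `μ` tends to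
`H_perc(μ)` by dominated convergence.
-/

section Law

variable {Ω α β γ : Type*} [Fintype Ω] {m : Ω → ℝ}

/-- The law of the random variable `X` on the finite space `Ω` weighted by `m`. -/
def lawOf (m : Ω → ℝ) (X : Ω → α) (a : α) : ℝ :=
  ∑ ω, if X ω = a then m ω else 0

/-- The conditional Shannon entropy `H(X | Y)` of random variables on the finite space `Ω`
weighted by `m`, via the chain rule `H(X, Y) - H(Y)`. -/
def condEntOf [Fintype α] [Fintype β] (m : Ω → ℝ) (X : Ω → α) (Y : Ω → β) : ℝ :=
  shEnt (lawOf m fun ω => (X ω, Y ω)) - shEnt (lawOf m Y)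

lemma lawOf_nonneg (hm : 0 ≤ m) (X : Ω → α) (a : α) : 0 ≤ lawOf m X a :=
  Finset.sum_nonneg fun ω _ => by split_ifs; exacts [hm ω, le_rfl]

lemma le_lawOf (hm : 0 ≤ m) (X : Ω → α) (ω : Ω) : m ω ≤ lawOf m X (X ω) :=
  calc m ω = if X ω = X ω then m ω else 0 := (if_pos rfl).symm
    _ ≤ lawOf m X (X ω) :=
      Finset.single_le_sum (f := fun ω' => if X ω' = X ω then m ω' else 0)
        (fun ω' _ => by split_ifs; exacts [hm ω', le_rfl]) (Finset.mem_univ ω)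

lemma lawOf_le_lawOf_comp (hm : 0 ≤ m) (Y : Ω → β) (φ : β → γ) (b : β) :
    lawOf m Y b ≤ lawOf m (φ ∘ Y) (φ b) := by
  refine Finset.sum_le_sum fun ω _ => ?_
  by_cases h : Y ω = b
  · simp [h]
  · rw [if_neg h]
    split_ifs
    exacts [hm ω, le_rfl]

lemma lawOf_id : lawOf m id = m := by
  ext ω
  simp [lawOf]

lemma sum_lawOf_mul [Fintype α] (X : Ω → α) (g : α → ℝ) :
    ∑ a, lawOf m X a * g a = ∑ ω, m ω * g (X ω) := by
  simp only [lawOf, Finset.sum_mul]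
  rw [Finset.sum_comm]
  simp [ite_mul]

lemma sum_lawOf [Fintype α] (X : Ω → α) : ∑ a, lawOf m X a = ∑ ω, m ω := by
  simpa using sum_lawOf_mul (m := m) X 1

lemma lawOf_lawOf [Fintype α] (X : Ω → α) (φ : α → β) :
    lawOf (lawOf m X) φ = lawOf m (φ ∘ X) := by
  ext b
  simpa [lawOf] using sum_lawOf_mul (m := m) X fun a => if φ a = b then 1 else 0

lemma sum_lawOf_prodMk [Fintype α] (X : Ω → α) (Y : Ω → β) (b : β) :
    ∑ a, lawOf m (fun ω => (X ω, Y ω)) (a, b) = lawOf m Y b := by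
  simp only [lawOf, Prod.mk.injEq]
  rw [Finset.sum_comm]
  refine Finset.sum_congr rfl fun ω _ => ?_
  by_cases h : Y ω = b <;> simp [h]

lemma shEnt_lawOf [Fintype α] (X : Ω → α) :
    shEnt (lawOf m X) = -∑ ω, m ω * Real.log (lawOf m X (X ω)) := by
  rw [shEnt, sum_lawOf_mul X fun a => Real.log (lawOf m X a)]

lemma shEnt_lawOf_congr [Fintype α] [Fintype β] {X : Ω → α} {Y : Ω → β}
    (h : ∀ ω ω', X ω = X ω' ↔ Y ω = Y ω') : shEnt (lawOf m X) = shEnt (lawOf m Y) := by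
  simp only [shEnt_lawOf, lawOf, h]

lemma continuous_shEnt : Continuous (shEnt : (Ω → ℝ) → ℝ) :=
  (continuous_finsetSum _ fun ω _ => Real.continuous_mul_log.comp (continuous_apply ω)).neg

end Law

section CondEntOf

variable {Ω α β γ : Type*} [Fintype Ω] [Fintype α] [Fintype β] [Fintype γ] {m : Ω → ℝ}

lemma condEntOf_eq_sum (X : Ω → α) (Y : Ω → β) :
    condEntOf m X Y = ∑ ω, m ω *
      (Real.log (lawOf m Y (Y ω)) - Real.log (lawOf m (fun ω => (X ω, Y ω)) (X ω, Y ω))) := by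
  rw [condEntOf, shEnt_lawOf, shEnt_lawOf]
  simp only [mul_sub, Finset.sum_sub_distrib]
  ring

lemma condEntOf_nonneg (hm : 0 ≤ m) (X : Ω → α) (Y : Ω → β) : 0 ≤ condEntOf m X Y := by
  rw [condEntOf_eq_sum]
  refine Finset.sum_nonneg fun ω _ => ?_
  rcases (hm ω).eq_or_lt with h | h
  · simp [← h]
  · exact mul_nonneg h.le <| sub_nonneg.2 <|
      Real.log_le_log (h.trans_le (le_lawOf hm (fun ω => (X ω, Y ω)) ω))
        (lawOf_le_lawOf_comp hm (fun ω => (X ω, Y ω)) Prod.snd _)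

-- Gibbs' inequality: `log t ≤ t - 1` at the ratio `t` of `κ b a * P(Y = b)` to `P(X = a, Y = b)`.
lemma condEntOf_le_crossEntropy (hm : 0 ≤ m) (X : Ω → α) (Y : Ω → β) {κ : β → α → ℝ}
    (hκ : ∀ b a, 0 ≤ κ b a) (hκ_sum : ∀ b, ∑ a, κ b a ≤ 1)
    (hκ_pos : ∀ ω, 0 < m ω → 0 < κ (Y ω) (X ω)) :
    condEntOf m X Y ≤ -∑ ω, m ω * Real.log (κ (Y ω) (X ω)) := by
  set P := lawOf m fun ω => (X ω, Y ω)
  set Q := lawOf m Y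
  let t : α × β → ℝ := fun c => κ c.2 c.1 * Q c.2 / P c
  have log_le : ∀ ω, m ω * (Real.log (Q (Y ω)) - Real.log (P (X ω, Y ω))) ≤
      m ω * t (X ω, Y ω) - m ω - m ω * Real.log (κ (Y ω) (X ω)) := by
    intro ω
    rcases (hm ω).eq_or_lt with h | h
    · simp [← h]
    have hP : 0 < P (X ω, Y ω) := h.trans_le (le_lawOf hm (fun ω => (X ω, Y ω)) ω)
    have hQ : 0 < Q (Y ω) := h.trans_le (le_lawOf hm Y ω)
    have hκω := hκ_pos ω h
    have hlog : Real.log (κ (Y ω) (X ω) * Q (Y ω) / P (X ω, Y ω)) ≤ t (X ω, Y ω) - 1 :=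
      Real.log_le_sub_one_of_pos (by positivity)
    rw [Real.log_div (by positivity) hP.ne', Real.log_mul hκω.ne' hQ.ne'] at hlog
    linarith [mul_le_mul_of_nonneg_left hlog h.le]
  have sum_t_le : ∑ ω, m ω * t (X ω, Y ω) ≤ ∑ ω, m ω :=
    calc ∑ ω, m ω * t (X ω, Y ω) = ∑ b, ∑ a, P (a, b) * t (a, b) := by
          rw [← sum_lawOf_mul (fun ω => (X ω, Y ω)) t, Fintype.sum_prod_type_right]
      _ ≤ ∑ b, ∑ a, κ b a * Q b := by
          refine Finset.sum_le_sum fun b _ => Finset.sum_le_sum fun a _ => ?_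
          rw [mul_div_left_comm]
          exact mul_le_of_le_one_right (mul_nonneg (hκ b a) (lawOf_nonneg hm Y b))
            (div_self_le_one _)
      _ = ∑ b, (∑ a, κ b a) * Q b := by simp only [Finset.sum_mul]
      _ ≤ ∑ b, Q b := Finset.sum_le_sum fun b _ =>
          mul_le_of_le_one_left (lawOf_nonneg hm Y b) (hκ_sum b)
      _ = ∑ ω, m ω := sum_lawOf Y
  have key := Finset.sum_le_sum fun ω (_ : ω ∈ Finset.univ) => log_le ω
  rw [← condEntOf_eq_sum, Finset.sum_sub_distrib, Finset.sum_sub_distrib] at key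
  linarith

lemma condEntOf_le_condEntOf_comp (hm : 0 ≤ m) (X : Ω → α) (Y : Ω → β) (φ : β → γ) :
    condEntOf m X Y ≤ condEntOf m X (φ ∘ Y) := by
  set P := lawOf m fun ω => (X ω, φ (Y ω))
  set Q := lawOf m (φ ∘ Y)
  have hP : ∀ c, 0 ≤ P c := lawOf_nonneg hm _
  have hQ : ∀ c, 0 ≤ Q c := lawOf_nonneg hm _
  have P_pos : ∀ ω, 0 < m ω → 0 < P (X ω, φ (Y ω)) := fun ω h =>
    h.trans_le (le_lawOf hm (fun ω => (X ω, φ (Y ω))) ω)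
  have Q_pos : ∀ ω, 0 < m ω → 0 < Q (φ (Y ω)) := fun ω h =>
    h.trans_le (le_lawOf hm (φ ∘ Y) ω)
  calc condEntOf m X Y ≤ -∑ ω, m ω * Real.log (P (X ω, φ (Y ω)) / Q (φ (Y ω))) := by
        refine condEntOf_le_crossEntropy hm X Y (κ := fun b a => P (a, φ b) / Q (φ b))
          (fun b a => div_nonneg (hP _) (hQ _)) (fun b => ?_)
          fun ω h => div_pos (P_pos ω h) (Q_pos ω h)
        rw [← Finset.sum_div, sum_lawOf_prodMk X (fun ω => φ (Y ω))]
        exact div_self_le_one _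
    _ = condEntOf m X (φ ∘ Y) := by
        rw [condEntOf_eq_sum, ← Finset.sum_neg_distrib]
        refine Finset.sum_congr rfl fun ω _ => ?_
        rcases (hm ω).eq_or_lt with h | h
        · simp [← h]
        · rw [Real.log_div (P_pos ω h).ne' (Q_pos ω h).ne', ← mul_neg, neg_sub]
          rfl

lemma condEntOf_le_log_card (hm : 0 ≤ m) (hm1 : ∑ ω, m ω = 1) (X : Ω → α) (Y : Ω → β) :
    condEntOf m X Y ≤ Real.log (Fintype.card α) := by
  refine (condEntOf_le_crossEntropy hm X Y (κ := fun _ _ => (Fintype.card α : ℝ)⁻¹)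
    (fun _ _ => by positivity) (fun _ => ?_) fun ω _ => ?_).trans_eq ?_
  · simpa using mul_inv_le_one
  · have : Nonempty α := ⟨X ω⟩
    exact inv_pos.2 (Nat.cast_pos.2 Fintype.card_pos)
  · rw [← Finset.sum_mul, hm1, one_mul, Real.log_inv, neg_neg]

end CondEntOf

section CondEnt

variable {V A : Type*} [Fintype V] [Fintype A] {m : (V → A) → ℝ}

lemma marg_eq_lawOf (m : (V → A) → ℝ) (S : Finset V) : marg m S = lawOf m S.restrict := by
  ext η
  simp [marg, lawOf, funext_iff]

lemma shEnt_marg_empty (hm1 : ∑ x, m x = 1) : shEnt (marg m ∅) = 0 := by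
  simp [shEnt, marg, hm1]

lemma shEnt_marg_univ (m : (V → A) → ℝ) : shEnt (marg m Finset.univ) = shEnt m := by
  rw [marg_eq_lawOf, shEnt_lawOf_congr (Y := id) (by simp [funext_iff]), lawOf_id]

lemma condEnt_eq_condEntOf (m : (V → A) → ℝ) (v : V) (S : Finset V) :
    condEnt m v S = condEntOf m (fun x => x v) S.restrict := by
  rw [condEnt, condEntOf, marg_eq_lawOf, marg_eq_lawOf,
    shEnt_lawOf_congr (Y := fun x => (x v, S.restrict x)) (by simp [funext_iff])]

lemma condEnt_mem_Icc (hm : 0 ≤ m) (hm1 : ∑ x, m x = 1) (v : V) (S : Finset V) :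
    condEnt m v S ∈ Set.Icc 0 (Real.log (Fintype.card A)) := by
  rw [condEnt_eq_condEntOf]
  exact ⟨condEntOf_nonneg hm _ _, condEntOf_le_log_card hm hm1 _ _⟩

lemma condEnt_antitone (hm : 0 ≤ m) (v : V) : Antitone (condEnt m v) := fun T S hTS => by
  rw [condEnt_eq_condEntOf, condEnt_eq_condEntOf, ← Finset.restrict₂_comp_restrict hTS]
  exact condEntOf_le_condEntOf_comp hm (fun x => x v) S.restrict _

lemma continuous_condEnt (v : V) (S : Finset V) :
    Continuous fun m : (V → A) → ℝ => condEnt m v S := by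
  have continuous_marg (T : Finset V) : Continuous fun m : (V → A) → ℝ => marg m T := by
    unfold marg
    refine continuous_pi fun η => continuous_finsetSum _ fun x _ => ?_
    split_ifs <;> fun_prop
  exact (continuous_shEnt.comp (continuous_marg _)).sub (continuous_shEnt.comp (continuous_marg _))

lemma condEnt_lawOf_comp {K : Type*} [Fintype K] (m : (V → A) → ℝ) (f : K → V) (o : K)
    (T : Finset K) :
    condEnt (lawOf m fun x => x ∘ f) o T = condEnt m (f o) (T.image f) := by
  have shEnt_marg (U : Finset K) :
      shEnt (marg (lawOf m fun x => x ∘ f) U) = shEnt (marg m (U.image f)) := by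
    rw [marg_eq_lawOf, marg_eq_lawOf, lawOf_lawOf]
    exact shEnt_lawOf_congr (by simp [funext_iff])
  rw [condEnt, condEnt, shEnt_marg, shEnt_marg, Finset.image_insert]

end CondEnt

section Bernoulli

variable {ι κ : Type*} {p : ℝ} {I : Finset ι} {F G : Finset ι → ℝ}

/-- The expectation of `F S` for the random subset `S` of `I` that keeps each point independently
with probability `p`, that is, for Bernoulli(`p`) site percolation on the finite set `I`. -/
def bernAvg (p : ℝ) (I : Finset ι) (F : Finset ι → ℝ) : ℝ :=
  ∑ S ∈ I.powerset, p ^ S.card * (1 - p) ^ (I.card - S.card) * F S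

lemma bernAvg_congr (h : ∀ S ⊆ I, F S = G S) : bernAvg p I F = bernAvg p I G :=
  Finset.sum_congr rfl fun S hS => by rw [h S (Finset.mem_powerset.1 hS)]

lemma bernAvg_mono (hp : p ∈ Set.Icc 0 1) (h : ∀ S ⊆ I, F S ≤ G S) :
    bernAvg p I F ≤ bernAvg p I G :=
  Finset.sum_le_sum fun S hS => mul_le_mul_of_nonneg_left (h S (Finset.mem_powerset.1 hS)) <|
    mul_nonneg (pow_nonneg hp.1 _) (pow_nonneg (sub_nonneg.2 hp.2) _)

lemma bernAvg_const (p : ℝ) (I : Finset ι) (c : ℝ) : bernAvg p I (fun _ => c) = c := by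
  rw [bernAvg, ← Finset.sum_mul, Finset.sum_pow_mul_eq_add_pow, add_sub_cancel, one_pow, one_mul]

lemma bernAvg_mem_Icc (hp : p ∈ Set.Icc 0 1) {a b : ℝ} (h : ∀ S ⊆ I, F S ∈ Set.Icc a b) :
    bernAvg p I F ∈ Set.Icc a b :=
  ⟨(bernAvg_const p I a).symm.trans_le (bernAvg_mono hp fun S hS => (h S hS).1),
    (bernAvg_mono hp fun S hS => (h S hS).2).trans_eq (bernAvg_const p I b)⟩

lemma bernAvg_sub (p : ℝ) (I : Finset ι) (F G : Finset ι → ℝ) :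
    bernAvg p I (fun S => F S - G S) = bernAvg p I F - bernAvg p I G := by
  simp only [bernAvg, mul_sub, Finset.sum_sub_distrib]

lemma continuous_bernAvg (I : Finset ι) (F : Finset ι → ℝ) :
    Continuous fun p => bernAvg p I F := by
  unfold bernAvg
  fun_prop

lemma bernAvg_empty (p : ℝ) (F : Finset ι → ℝ) : bernAvg p ∅ F = F ∅ := by
  simp [bernAvg]

lemma bernAvg_zero (I : Finset ι) (F : Finset ι → ℝ) : bernAvg 0 I F = F ∅ := by
  rw [bernAvg, Finset.sum_eq_single ∅ (fun S _ hS => by simp [hS]) (by simp)]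
  simp

lemma bernAvg_one (I : Finset ι) (F : Finset ι → ℝ) : bernAvg 1 I F = F I := by
  rw [bernAvg, Finset.sum_eq_single I _ (by simp)]
  · simp
  · intro S hS hSI
    have := Finset.card_lt_card ((Finset.mem_powerset.1 hS).ssubset_of_ne hSI)
    simp [Nat.sub_ne_zero_of_lt this]

lemma bernAvg_insert {a : ι} (ha : a ∉ I) (p : ℝ) (F : Finset ι → ℝ) :
    bernAvg p (insert a I) F =
      (1 - p) * bernAvg p I F + p * bernAvg p I (fun S => F (insert a S)) := by
  rw [bernAvg, Finset.sum_powerset_insert ha, bernAvg, bernAvg, Finset.mul_sum, Finset.mul_sum]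
  congr 1 <;> refine Finset.sum_congr rfl fun S hS => ?_
  · have hcard := Finset.card_le_card (Finset.mem_powerset.1 hS)
    rw [Finset.card_insert_of_notMem ha, Nat.sub_add_comm hcard, pow_succ]
    ring
  · have haS : a ∉ S := fun h => ha (Finset.mem_powerset.1 hS h)
    rw [Finset.card_insert_of_notMem ha, Finset.card_insert_of_notMem haS,
      Nat.add_sub_add_right, pow_succ]
    ring

lemma bernAvg_union_inter (p : ℝ) (J K : Finset ι) (F : Finset ι → ℝ) :
    bernAvg p (J ∪ K) (fun S => F (S ∩ J)) = bernAvg p J F := by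
  induction K using Finset.induction_on with
  | empty =>
    rw [Finset.union_empty]
    exact bernAvg_congr fun S hS => by rw [Finset.inter_eq_left.2 hS]
  | insert a K _ ih =>
    rw [Finset.union_insert]
    by_cases ha : a ∈ J ∪ K
    · rw [Finset.insert_eq_of_mem ha, ih]
    · have haJ : a ∉ J := fun h => ha (Finset.mem_union_left K h)
      simp only [bernAvg_insert ha, Finset.insert_inter_of_notMem haJ, ih]
      ring

lemma bernAvg_univ_inter [Fintype ι] (p : ℝ) (J : Finset ι) (F : Finset ι → ℝ) :
    bernAvg p Finset.univ (fun S => F (S ∩ J)) = bernAvg p J F := by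
  rw [← Finset.union_eq_right.2 J.subset_univ, bernAvg_union_inter]

lemma bernAvg_image {J : Finset κ} {f : κ → ι} (hf : Set.InjOn f J) (p : ℝ) (F : Finset ι → ℝ) :
    bernAvg p (J.image f) F = bernAvg p J (fun S => F (S.image f)) := by
  induction J using Finset.induction_on generalizing F with
  | empty => simp only [Finset.image_empty, bernAvg_empty]
  | insert a J ha ih =>
    rw [Finset.coe_insert] at hf
    have hfa : f a ∉ J.image f := by
      simpa using ((Set.injOn_insert (by simpa using ha)).1 hf).2
    have hfJ : Set.InjOn f J := hf.mono (Set.subset_insert a J)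
    simp only [Finset.image_insert, bernAvg_insert hfa, bernAvg_insert ha, ih hfJ]

lemma hasDerivAt_bernAvg (p : ℝ) (I : Finset ι) (F : Finset ι → ℝ) :
    HasDerivAt (fun p => bernAvg p I F)
      (∑ v ∈ I, bernAvg p I (fun S => F (insert v S) - F (S.erase v))) p := by
  induction I using Finset.induction_on generalizing F with
  | empty =>
    simp only [bernAvg_empty, Finset.sum_empty]
    exact hasDerivAt_const p (F ∅)
  | insert a I ha ih =>
    have notMem_of_subset {S : Finset ι} (hS : S ⊆ I) : a ∉ S := fun h => ha (hS h)
    have deriv_at_a : bernAvg p (insert a I) (fun S => F (insert a S) - F (S.erase a)) =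
        bernAvg p I (fun S => F (insert a S)) - bernAvg p I F := by
      have h1 : bernAvg p I (fun S => F (insert a S) - F (S.erase a)) =
          bernAvg p I (fun S => F (insert a S) - F S) :=
        bernAvg_congr fun S hS => by rw [Finset.erase_eq_of_notMem (notMem_of_subset hS)]
      have h2 : bernAvg p I (fun S => F (insert a (insert a S)) - F ((insert a S).erase a)) =
          bernAvg p I (fun S => F (insert a S) - F S) :=
        bernAvg_congr fun S hS => by
          rw [Finset.insert_idem, Finset.erase_insert (notMem_of_subset hS)]
      rw [bernAvg_insert ha, h1, h2, bernAvg_sub]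
      ring
    have deriv_at_ne : ∀ v ∈ I,
        bernAvg p (insert a I) (fun S => F (insert v S) - F (S.erase v)) =
          (1 - p) * bernAvg p I (fun S => F (insert v S) - F (S.erase v)) +
          p * bernAvg p I (fun S => F (insert a (insert v S)) - F (insert a (S.erase v))) := by
      intro v hv
      have hav : a ≠ v := fun h => ha (h ▸ hv)
      simp only [bernAvg_insert ha, Finset.insert_comm v a, Finset.erase_insert_of_ne hav]
    rw [Finset.sum_insert ha, deriv_at_a, Finset.sum_congr rfl deriv_at_ne,
      Finset.sum_add_distrib, ← Finset.mul_sum, ← Finset.mul_sum]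
    simp only [bernAvg_insert ha]
    refine ((((hasDerivAt_id p).const_sub 1).mul (ih F)).add
      ((hasDerivAt_id p).mul (ih fun S => F (insert a S)))).congr_deriv ?_
    simp only [id_eq]
    ring

lemma integral_sum_bernAvg (I : Finset ι) (F : Finset ι → ℝ) :
    ∫ p in (0 : ℝ)..1, ∑ v ∈ I, bernAvg p I (fun S => F (insert v S) - F (S.erase v)) =
      F I - F ∅ := by
  rw [intervalIntegral.integral_eq_sub_of_hasDerivAt (fun p _ => hasDerivAt_bernAvg p I F)
    ((continuous_finsetSum _ fun v _ => continuous_bernAvg I _).intervalIntegrable _ _),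
    bernAvg_one, bernAvg_zero]

end Bernoulli

section Percolation

variable {ι : Type*} {p : ℝ} {ν : Measure (ι → Bool)}

/-- `ν` is the law of Bernoulli(`p`) site percolation on `ι`, subsets of `ι` being encoded by
their indicator functions; the law is pinned down by its values on cylinder sets. -/
def IsBernoulliPercolation (p : ℝ) (ν : Measure (ι → Bool)) : Prop :=
  ∀ (T : Finset ι) (g : ι → Bool), ν {x | ∀ i ∈ T, x i = g i} =
    ∏ i ∈ T, ENNReal.ofReal (if g i then p else 1 - p)

lemma IsBernoulliPercolation.isProbabilityMeasure (hν : IsBernoulliPercolation p ν) :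
    IsProbabilityMeasure ν :=
  ⟨by simpa using hν ∅ fun _ => true⟩

lemma IsBernoulliPercolation.measureReal_filter_eq (hν : IsBernoulliPercolation p ν)
    (hp : p ∈ Set.Icc 0 1) {I S : Finset ι} (hS : S ⊆ I) :
    ν.real {x | I.filter (fun i => x i = true) = S} =
      p ^ S.card * (1 - p) ^ (I.card - S.card) := by
  have filter_eq_iff (x : ι → Bool) :
      I.filter (fun i => x i = true) = S ↔ ∀ i ∈ I, x i = decide (i ∈ S) := by
    simp only [Finset.ext_iff, Finset.mem_filter]
    refine forall_congr' fun i => ?_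
    rw [Bool.eq_iff_iff (b := decide _), decide_eq_true_eq]
    have := @hS i
    tauto
  have prod_S : ∏ i ∈ S, (if i ∈ S then p else 1 - p) = p ^ S.card :=
    Finset.prod_eq_pow_card fun i hi => if_pos hi
  have prod_sdiff : ∏ i ∈ I \ S, (if i ∈ S then p else 1 - p) = (1 - p) ^ (I.card - S.card) := by
    rw [← Finset.card_sdiff_of_subset hS]
    exact Finset.prod_eq_pow_card fun i hi => if_neg (Finset.mem_sdiff.1 hi).2
  simp only [filter_eq_iff]
  rw [Measure.real, hν, ENNReal.toReal_prod, ← prod_S, ← prod_sdiff, mul_comm,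
    Finset.prod_sdiff hS]
  refine Finset.prod_congr rfl fun i _ => ?_
  rw [ENNReal.toReal_ofReal]
  · simp only [decide_eq_true_eq]
  · split_ifs
    exacts [hp.1, sub_nonneg.2 hp.2]

lemma measurable_filter_eq_true (I : Finset ι) :
    @Measurable _ _ _ ⊤ fun x : ι → Bool => I.filter fun i => x i = true := by
  let g (y : I → Bool) : Finset ι := (Finset.univ.filter fun i => y i = true).map (.subtype _)
  have h : (fun x : ι → Bool => I.filter fun i => x i = true) = g ∘ I.restrict := by
    ext x i
    simp only [g, Finset.mem_filter, Finset.mem_map, Function.comp_apply]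
    exact ⟨fun h => ⟨⟨i, h.1⟩, ⟨Finset.mem_univ _, h.2⟩, rfl⟩,
      by rintro ⟨j, hj, rfl⟩; exact ⟨j.2, hj.2⟩⟩
  rw [h]
  let : MeasurableSpace (Finset ι) := ⊤
  exact (measurable_of_finite g).comp (Finset.measurable_restrict I)

lemma IsBernoulliPercolation.integral_filter (hν : IsBernoulliPercolation p ν)
    (hp : p ∈ Set.Icc 0 1) (I : Finset ι) (F : Finset ι → ℝ) :
    ∫ x, F (I.filter fun i => x i = true) ∂ν = bernAvg p I F := by
  have := hν.isProbabilityMeasure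
  let E (S : Finset ι) : Set (ι → Bool) := {x | I.filter (fun i => x i = true) = S}
  have measurableSet_E (S : Finset ι) : MeasurableSet (E S) :=
    measurable_filter_eq_true I (t := {S}) trivial
  calc ∫ x, F (I.filter fun i => x i = true) ∂ν
      = ∫ x, ∑ S ∈ I.powerset, (E S).indicator (fun _ => F S) x ∂ν := by
        congr 1 with x
        simp [E, Set.indicator_apply, Finset.filter_subset]
    _ = ∑ S ∈ I.powerset, ν.real (E S) * F S := by
        rw [integral_finsetSum _ fun S _ => (integrable_const _).indicator (measurableSet_E S)]
        simp only [integral_indicator_const _ (measurableSet_E _), smul_eq_mul]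
    _ = bernAvg p I F := Finset.sum_congr rfl fun S hS => by
        rw [hν.measureReal_filter_eq hp (Finset.mem_powerset.1 hS)]

end Percolation

section PercEnt

variable {V A : Type*} [Fintype V] [Fintype A] {m : (V → A) → ℝ}

/-- The percolative entropy at the vertex `o` of a law `m` on a finite product `V → A`: the
conditional entropy of the spin at `o` given the spins at the other points of a Bernoulli(`p`)
subset of `V`, averaged over `p` uniform in `[0, 1]`. -/
def percEnt (m : (V → A) → ℝ) (o : V) : ℝ :=
  ∫ p in (0 : ℝ)..1, bernAvg p Finset.univ fun S => condEnt m o (S.erase o)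

lemma percEnt_mem_Icc (hm : 0 ≤ m) (hm1 : ∑ x, m x = 1) (o : V) :
    percEnt m o ∈ Set.Icc 0 (Real.log (Fintype.card A)) := by
  have bernAvg_mem (p : ℝ) (hp : p ∈ Set.Icc 0 1) :=
    bernAvg_mem_Icc hp (I := Finset.univ) fun S _ => condEnt_mem_Icc hm hm1 o (S.erase o)
  refine ⟨intervalIntegral.integral_nonneg zero_le_one fun p hp => (bernAvg_mem p hp).1, ?_⟩
  calc percEnt m o ≤ ∫ _ in (0 : ℝ)..1, Real.log (Fintype.card A) :=
        intervalIntegral.integral_mono_on zero_le_one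
          ((continuous_bernAvg _ _).intervalIntegrable _ _) intervalIntegrable_const
          fun p hp => (bernAvg_mem p hp).2
    _ = Real.log (Fintype.card A) := by simp

lemma shEnt_eq_sum_percEnt (hm1 : ∑ x, m x = 1) : shEnt m = ∑ v, percEnt m v := by
  have condEnt_erase (v : V) (S : Finset V) : condEnt m v (S.erase v) =
      shEnt (marg m (insert v S)) - shEnt (marg m (S.erase v)) := by
    rw [condEnt, show insert v (S.erase v) = insert v S by grind]
  calc shEnt m = shEnt (marg m Finset.univ) - shEnt (marg m ∅) := by
        rw [shEnt_marg_univ, shEnt_marg_empty hm1, sub_zero]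
    _ = ∫ p in (0 : ℝ)..1, ∑ v, bernAvg p Finset.univ fun S => condEnt m v (S.erase v) := by
        simp only [condEnt_erase]
        exact (integral_sum_bernAvg Finset.univ fun S => shEnt (marg m S)).symm
    _ = ∑ v, percEnt m v :=
        intervalIntegral.integral_finsetSum fun v _ =>
          (continuous_bernAvg _ _).intervalIntegrable _ _

lemma percEnt_le_percEnt_lawOf_comp {K : Type*} [Fintype K] (hm : 0 ≤ m) {f : K → V}
    (hf : f.Injective) (o : K) : percEnt m (f o) ≤ percEnt (lawOf m fun x => x ∘ f) o := by
  refine intervalIntegral.integral_mono_on zero_le_one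
    ((continuous_bernAvg _ _).intervalIntegrable _ _)
    ((continuous_bernAvg _ _).intervalIntegrable _ _) fun p hp => ?_
  let J : Finset V := Finset.univ.image f
  calc bernAvg p Finset.univ (fun S => condEnt m (f o) (S.erase (f o)))
      ≤ bernAvg p Finset.univ (fun S => condEnt m (f o) ((S ∩ J).erase (f o))) :=
        bernAvg_mono hp fun S _ =>
          condEnt_antitone hm (f o) (Finset.erase_subset_erase _ Finset.inter_subset_left)
    _ = bernAvg p J (fun S => condEnt m (f o) (S.erase (f o))) :=
        bernAvg_univ_inter p J fun S => condEnt m (f o) (S.erase (f o))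
    _ = bernAvg p Finset.univ (fun S => condEnt m (f o) ((S.image f).erase (f o))) :=
        bernAvg_image hf.injOn p _
    _ = bernAvg p Finset.univ (fun S => condEnt (lawOf m fun x => x ∘ f) o (S.erase o)) := by
        simp only [condEnt_lawOf_comp, Finset.image_erase hf]

lemma continuous_percEnt (o : V) : Continuous fun m : (V → A) → ℝ => percEnt m o := by
  have continuous_term (S : Finset V) := continuous_condEnt (A := A) o (S.erase o)
  refine intervalIntegral.continuous_parametric_intervalIntegral_of_continuous' ?_ 0 1
  unfold bernAvg Function.uncurry
  fun_prop

end PercEnt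

section LawOfM

variable {Ω α β : Type*} [MeasurableSpace Ω] {μ : Measure Ω}

/-- The law of the random variable `X` under the measure `μ`, as a vector of point masses. -/
def lawOfM (μ : Measure Ω) (X : Ω → α) (a : α) : ℝ :=
  μ.real {ω | X ω = a}

lemma lawOfM_nonneg (X : Ω → α) : 0 ≤ lawOfM μ X := fun _ => measureReal_nonneg

variable [Fintype α] [MeasurableSpace α] [MeasurableSingletonClass α] {X : Ω → α}

lemma lawOf_lawOfM [IsFiniteMeasure μ] (hX : Measurable X) (φ : α → β) :
    lawOf (lawOfM μ X) φ = lawOfM μ (φ ∘ X) := by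
  ext b
  have h := sum_measureReal_preimage_singleton (μ := μ) (Finset.univ.filter fun a => φ a = b)
    fun a _ => hX (measurableSet_singleton a)
  rw [Finset.sum_filter] at h
  refine h.trans (congrArg μ.real ?_)
  ext ω
  simp

lemma sum_lawOfM [IsProbabilityMeasure μ] (hX : Measurable X) : ∑ a, lawOfM μ X a = 1 := by
  have h := congrFun (lawOf_lawOfM (μ := μ) hX fun _ => ()) ()
  simpa [lawOf, lawOfM] using h

end LawOfM

section Limit

variable {ι A K : Type*} [Fintype A] [MeasurableSpace A] [Fintype K] (μ : Measure (ι → A))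

lemma margM_eq_lawOfM (T : Finset ι) :
    margM μ T = lawOfM μ fun x => x ∘ ((↑) : T → ι) := by
  ext η
  simp [margM, lawOfM, Measure.real, funext_iff]

variable [MeasurableSingletonClass A] [IsProbabilityMeasure μ]

lemma condEnt_lawOfM_comp (f : K → ι) (o : K) (U : Finset K) :
    condEnt (lawOfM μ fun x => x ∘ f) o U = condEntM μ (f o) (U.image f) := by
  have shEnt_marg (U : Finset K) :
      shEnt (marg (lawOfM μ fun x => x ∘ f) U) = shEnt (margM μ (U.image f)) := by
    let pullback (y : U.image f → A) (k : U) : A := y ⟨f k, Finset.mem_image_of_mem f k.2⟩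
    have pullback_inj (y y' : U.image f → A) : pullback y = pullback y' ↔ id y = id y' := by
      refine ⟨fun h => funext fun i => ?_, congrArg pullback⟩
      obtain ⟨k, hk, hki⟩ := Finset.mem_image.1 i.2
      obtain rfl : ⟨f k, Finset.mem_image_of_mem f hk⟩ = i := Subtype.ext hki
      exact congrFun h ⟨k, hk⟩
    calc shEnt (marg (lawOfM μ fun x => x ∘ f) U)
        = shEnt (lawOf (margM μ (U.image f)) pullback) := by
          rw [marg_eq_lawOf, margM_eq_lawOfM, lawOf_lawOfM (by fun_prop),
            lawOf_lawOfM (by fun_prop)]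
          rfl
      _ = shEnt (margM μ (U.image f)) := by rw [shEnt_lawOf_congr pullback_inj, lawOf_id]
  rw [condEnt, condEntM, shEnt_marg, shEnt_marg, Finset.image_insert]

lemma percEnt_lawOfM_comp {f : K → ι} (hf : f.Injective) (o : K) :
    percEnt (lawOfM μ fun x => x ∘ f) o = ∫ p in (0 : ℝ)..1,
      bernAvg p (Finset.univ.image f) fun S => condEntM μ (f o) (S.erase (f o)) := by
  simp only [percEnt, bernAvg_image hf.injOn, condEnt_lawOfM_comp, Finset.image_erase hf]

lemma percEnt_margM {B : Finset ι} (o : B) :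
    percEnt (margM μ B) o =
      ∫ p in (0 : ℝ)..1, bernAvg p B fun S => condEntM μ o (S.erase o) := by
  have h := percEnt_lawOfM_comp μ (f := ((↑) : B → ι)) Subtype.val_injective o
  rwa [Finset.univ_eq_attach, Finset.attach_image_val, ← margM_eq_lawOfM] at h

lemma condEntM_eq_condEnt_margM {o : ι} {T B : Finset ι} (ho : o ∈ B) (hT : T ⊆ B) :
    condEntM μ o T = condEnt (margM μ B) ⟨o, ho⟩ (T.subtype (· ∈ B)) := by
  have h := condEnt_lawOfM_comp μ ((↑) : B → ι) ⟨o, ho⟩ (T.subtype (· ∈ B))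
  have image_subtype : (T.subtype (· ∈ B)).image (↑) = T := by
    ext i
    simpa using @hT i
  rwa [image_subtype, ← margM_eq_lawOfM, eq_comm] at h

lemma condEntM_mem_Icc (o : ι) (T : Finset ι) :
    condEntM μ o T ∈ Set.Icc 0 (Real.log (Fintype.card A)) := by
  rw [condEntM_eq_condEnt_margM μ (Finset.mem_insert_self o T) (Finset.subset_insert o T),
    margM_eq_lawOfM]
  have sum_eq_one := sum_lawOfM (μ := μ) (X := fun x => x ∘ ((↑) : ↥(insert o T) → ι)) (by fun_prop)
  exact condEnt_mem_Icc (lawOfM_nonneg _) (by convert sum_eq_one) _ _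

lemma condEntM_antitone (o : ι) : Antitone (condEntM μ o) := fun T S hTS => by
  have hS : S ⊆ insert o S := Finset.subset_insert o S
  rw [condEntM_eq_condEnt_margM μ (Finset.mem_insert_self o S) hS,
    condEntM_eq_condEnt_margM μ (Finset.mem_insert_self o S) (hTS.trans hS), margM_eq_lawOfM]
  exact condEnt_antitone (lawOfM_nonneg _) _ (Finset.subtype_mono hTS)

lemma tendsto_condEntM_condEntInf (o : ι) (S : Set ι) {T : ℕ → Finset ι} (hT : Monotone T)
    (hTS : (⋃ r, (T r : Set ι)) = S) :
    Tendsto (fun r => condEntM μ o (T r)) atTop (nhds (condEntInf μ o S)) := by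
  let T' : ℕ → {U : Finset ι // (U : Set ι) ⊆ S} := fun r =>
    ⟨T r, (Set.subset_iUnion (fun r => (T r : Set ι)) r).trans hTS.le⟩
  have tendsto_T' : Tendsto T' atTop atTop :=
    tendsto_atTop_atTop_of_monotone (fun _ _ h => hT h) fun U => by
      have directed_T : Directed (· ⊆ ·) fun r => (T r : Set ι) :=
        Monotone.directed_le fun _ _ h => Finset.coe_subset.2 (hT h)
      obtain ⟨r, hr⟩ := directed_T.exists_mem_subset_of_finset_subset_biUnion (s := U.1)
        (U.2.trans hTS.ge)
      exact ⟨r, Finset.coe_subset.1 hr⟩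
  have tendsto_iInf : Tendsto (fun U : {U : Finset ι // (U : Set ι) ⊆ S} => condEntM μ o U) atTop
      (nhds (condEntInf μ o S)) :=
    tendsto_atTop_ciInf (fun _ _ h => condEntM_antitone μ o h)
      ⟨0, by rintro _ ⟨U, rfl⟩; exact (condEntM_mem_Icc μ o U).1⟩
  simpa only [Function.comp_def] using tendsto_iInf.comp tendsto_T'

/-- The percolative entropy at the point `o` of a process on an arbitrary index set. The
percolative entropy `Hperc` is the case where `o` is the identity of a group. -/
def rootedHperc (θ : ℝ → Measure (ι → Bool)) (μ : Measure (ι → A)) (o : ι) : ℝ :=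
  ∫ p in (0 : ℝ)..1, ∫ x, condEntInf μ o ({i | x i = true} \ {o}) ∂θ p

lemma tendsto_bernAvg_condEntM {p : ℝ} {ν : Measure (ι → Bool)} (hp : p ∈ Set.Icc 0 1)
    (hν : IsBernoulliPercolation p ν) (o : ι) {B : ℕ → Finset ι} (hB : Monotone B)
    (hB_cover : (⋃ r, (B r : Set ι)) = Set.univ) :
    Tendsto (fun r => bernAvg p (B r) fun S => condEntM μ o (S.erase o)) atTop
      (nhds (∫ x, condEntInf μ o ({i | x i = true} \ {o}) ∂ν)) := by
  have := hν.isProbabilityMeasure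
  simp only [← hν.integral_filter hp]
  refine tendsto_integral_of_dominated_convergence (fun _ => Real.log (Fintype.card A))
    (fun r => ?_) (integrable_const _) (fun r => .of_forall fun x => ?_)
    (.of_forall fun x => tendsto_condEntM_condEntInf μ o _ (fun r s hrs => ?_) ?_)
  · have h : Measurable[⊤] fun S : Finset ι => condEntM μ o (S.erase o) := measurable_from_top
    exact (h.comp (measurable_filter_eq_true (B r))).aestronglyMeasurable
  · rw [Real.norm_of_nonneg (condEntM_mem_Icc μ o _).1]
    exact (condEntM_mem_Icc μ o _).2
  · exact Finset.erase_subset_erase _ (Finset.filter_subset_filter _ (hB hrs))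
  · ext i
    have hi : ∃ r, i ∈ B r := by simpa using hB_cover.ge (Set.mem_univ i)
    simp [hi, and_comm]

lemma tendsto_percEnt_margM {θ : ℝ → Measure (ι → Bool)}
    (hθ : ∀ p ∈ Set.Icc 0 1, IsBernoulliPercolation p (θ p)) (o : ι) {B : ℕ → Finset ι}
    (hB_root : ∀ r, o ∈ B r) (hB : Monotone B) (hB_cover : (⋃ r, (B r : Set ι)) = Set.univ) :
    Tendsto (fun r => percEnt (margM μ (B r)) ⟨o, hB_root r⟩) atTop
      (nhds (rootedHperc θ μ o)) := by
  have mem_Icc {p : ℝ} (hp : p ∈ Set.uIoc 0 1) : p ∈ Set.Icc (0 : ℝ) 1 := by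
    rw [Set.uIoc_of_le zero_le_one] at hp
    exact Set.Ioc_subset_Icc_self hp
  simp only [percEnt_margM]
  refine intervalIntegral.tendsto_integral_filter_of_dominated_convergence
    (fun _ => Real.log (Fintype.card A))
    (.of_forall fun r => (continuous_bernAvg _ _).aestronglyMeasurable)
    (.of_forall fun r => .of_forall fun p hp => ?_) intervalIntegrable_const
    (.of_forall fun p hp =>
      tendsto_bernAvg_condEntM μ (mem_Icc hp) (hθ p (mem_Icc hp)) o hB hB_cover)
  have h := bernAvg_mem_Icc (mem_Icc hp) (I := B r) fun S _ => condEntM_mem_Icc μ o (S.erase o)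
  rw [Real.norm_of_nonneg h.1]
  exact h.2

end Limit

section Windows

lemma exists_tvDist_imp_lt_add {Ω : Type*} [Fintype Ω] {Φ : (Ω → ℝ) → ℝ} (hΦ : Continuous Φ)
    (q : Ω → ℝ) {ε : ℝ} (hε : 0 < ε) : ∃ δ > 0, ∀ q', tvDist q' q ≤ δ → Φ q' < Φ q + ε := by
  have dist_le (q' : Ω → ℝ) : dist q' q ≤ 2 * tvDist q' q := by
    rw [tvDist, one_div, mul_inv_cancel_left₀ two_ne_zero]
    exact (dist_pi_le_iff (Finset.sum_nonneg fun _ _ => abs_nonneg _)).2 fun ω =>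
      Finset.single_le_sum (f := fun ω => |q' ω - q ω|) (fun _ _ => abs_nonneg _)
        (Finset.mem_univ ω)
  obtain ⟨δ, hδ, hball⟩ := Metric.eventually_nhds_iff.1
    (hΦ.continuousAt.eventually_lt_const (lt_add_of_pos_right (Φ q) hε))
  exact ⟨δ / 3, by positivity, fun q' hq' => hball (by linarith [dist_le q'])⟩

lemma sum_div_card_le {W : Type*} [Fintype W] [Nonempty W] {u : W → ℝ} {s : Finset W} {L c : ℝ}
    (hL : ∀ v ∈ s, u v ≤ L) (hc : ∀ v ∉ s, u v ≤ c) :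
    (∑ v, u v) / Fintype.card W ≤ (1 - (s.dens : ℝ)) * c + s.dens * L := by
  have sum_le : ∑ v, u v ≤ sᶜ.card * c + s.card * L := by
    rw [← Finset.sum_compl_add_sum s, ← nsmul_eq_mul, ← nsmul_eq_mul]
    exact add_le_add (Finset.sum_le_card_nsmul _ _ _ fun v hv => hc v (Finset.mem_compl.1 hv))
      (Finset.sum_le_card_nsmul _ _ _ hL)
  have card_pos : (0 : ℝ) < Fintype.card W := Nat.cast_pos.2 Fintype.card_pos
  rw [Finset.card_compl, Nat.cast_sub s.card_le_univ] at sum_le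
  rw [Finset.nnratCast_dens, div_le_iff₀ card_pos]
  exact sum_le.trans_eq (by field_simp)

variable {N : Type*} {l : Filter N} {V : N → Type*} [∀ n, Fintype (V n)] [∀ n, Nonempty (V n)]

lemma tendsto_dens_not_or {P Q : ∀ n, V n → Prop} [∀ n, DecidablePred (P n)]
    [∀ n, DecidablePred (Q n)]
    (hP : Tendsto (fun n => ((Finset.univ.filter (P n)).dens : ℝ)) l (nhds 1))
    (hQ : Tendsto (fun n => ((Finset.univ.filter (Q n)).dens : ℝ)) l (nhds 0)) :
    Tendsto (fun n => ((Finset.univ.filter fun v => ¬P n v ∨ Q n v).dens : ℝ)) l (nhds 0) := by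
  have dens_le (n : N) : ((Finset.univ.filter fun v => ¬P n v ∨ Q n v).dens : ℝ) ≤
      1 - (Finset.univ.filter (P n)).dens + (Finset.univ.filter (Q n)).dens := by
    have h_add : ((Finset.univ.filter (P n)).dens : ℝ) +
        (Finset.univ.filter fun v => ¬P n v).dens = 1 := by
      exact_mod_cast (Finset.dens_filter_add_dens_filter_not_eq_dens (P n)).trans Finset.dens_univ
    have h_or : ((Finset.univ.filter fun v => ¬P n v ∨ Q n v).dens : ℝ) ≤
        (Finset.univ.filter fun v => ¬P n v).dens + (Finset.univ.filter (Q n)).dens := by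
      rw [Finset.filter_or]
      exact_mod_cast Finset.dens_union_le _ _
    linarith
  exact squeeze_zero (fun n => NNRat.cast_nonneg _) dens_le
    (by simpa using (hP.const_sub 1).add hQ)

lemma limsup_sum_div_card_le [l.NeBot] {u : ∀ n, V n → ℝ} {L c : ℝ}
    (hu : ∀ n v, u n v ∈ Set.Icc 0 L) {s : ∀ n, Finset (V n)}
    (hs : Tendsto (fun n => ((s n).dens : ℝ)) l (nhds 0)) (hc : ∀ n, ∀ v ∉ s n, u n v ≤ c) :
    limsup (fun n => (∑ v, u n v) / (Fintype.card (V n) : ℝ)) l ≤ c := by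
  have tendsto_bound : Tendsto (fun n => (1 - ((s n).dens : ℝ)) * c + (s n).dens * L) l
      (nhds c) := by
    simpa only [sub_zero, one_mul, zero_mul, add_zero] using
      ((hs.const_sub 1).mul_const c).add (hs.mul_const L)
  have nonneg (n : N) : 0 ≤ (∑ v, u n v) / (Fintype.card (V n) : ℝ) :=
    div_nonneg (Finset.sum_nonneg fun v _ => (hu n v).1) (Nat.cast_nonneg _)
  calc limsup (fun n => (∑ v, u n v) / (Fintype.card (V n) : ℝ)) l
      ≤ limsup (fun n => (1 - ((s n).dens : ℝ)) * c + (s n).dens * L) l :=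
        limsup_le_limsup (.of_forall fun n => sum_div_card_le (fun v _ => (hu n v).2) (hc n))
          (IsCoboundedUnder.of_frequently_ge (.of_forall nonneg)) tendsto_bound.isBoundedUnder_le
    _ = c := tendsto_bound.limsup_eq

variable {A K : Type*} [Fintype A] [Fintype K] [DecidableEq K] {m : ∀ n, (V n → A) → ℝ}

lemma limsup_shEnt_div_card_le_percEnt [l.NeBot] (hm : ∀ n, 0 ≤ m n)
    (hm1 : ∀ n, ∑ x, m n x = 1) {o : K} {q : (K → A) → ℝ} {f : ∀ n, V n → K → V n}
    [∀ n, DecidablePred fun v => (f n v).Injective] (hf : ∀ n v, f n v o = v)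
    (hf_inj : Tendsto (fun n => ((Finset.univ.filter fun v => (f n v).Injective).dens : ℝ))
      l (nhds 1))
    (hf_law : ∀ δ > 0, Tendsto (fun n => ((Finset.univ.filter fun v =>
      δ < tvDist (lawOf (m n) fun x => x ∘ f n v) q).dens : ℝ)) l (nhds 0)) :
    limsup (fun n => shEnt (m n) / (Fintype.card (V n) : ℝ)) l ≤ percEnt q o := by
  refine le_of_forall_pos_le_add fun ε hε => ?_
  obtain ⟨δ, hδ, percEnt_lt⟩ := exists_tvDist_imp_lt_add (continuous_percEnt o) q hε
  simp only [fun n => shEnt_eq_sum_percEnt (hm1 n)]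
  refine limsup_sum_div_card_le (fun n v => percEnt_mem_Icc (hm n) (hm1 n) v)
    (tendsto_dens_not_or hf_inj (hf_law δ hδ)) fun n v hv => ?_
  simp only [Finset.mem_filter_univ, not_or, not_not, not_lt] at hv
  calc percEnt (m n) v = percEnt (m n) (f n v o) := by rw [hf]
    _ ≤ percEnt (lawOf (m n) fun x => x ∘ f n v) o :=
      percEnt_le_percEnt_lawOf_comp (hm n) hv.1 o
    _ ≤ percEnt q o + ε := (percEnt_lt _ hv.2).le

end Windows

lemma pushName_eq_lawOf {Γ A W : Type*} [Group Γ] [Fintype A] [Fintype W] (B : Finset Γ)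
    (γ : Γ →* Equiv.Perm W) (m : (W → A) → ℝ) (v : W) :
    pushName B γ m v = lawOf m fun x (g : B) => x (γ g v) := by
  ext η
  simp only [pushName, lawOf, funext_iff]

theorem limsup_entropy_le_Hperc_general {ι A N : Type*} [Fintype A] [MeasurableSpace A]
    [MeasurableSingletonClass A] (o : ι) (B : ℕ → Finset ι) (hB_root : ∀ r, o ∈ B r)
    (hB : Monotone B) (hB_cover : (⋃ r, (B r : Set ι)) = Set.univ)
    (μ : Measure (ι → A)) [IsProbabilityMeasure μ] (θ : ℝ → Measure (ι → Bool))
    (hθ : ∀ p ∈ Set.Icc (0 : ℝ) 1, IsBernoulliPercolation p (θ p))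
    (l : Filter N) [l.NeBot] (V : N → Type*) [∀ n, Fintype (V n)] [∀ n, Nonempty (V n)]
    (f : ∀ n, V n → ι → V n) (hf : ∀ n v, f n v o = v)
    (hf_inj : ∀ r, Tendsto (fun n => ((Finset.univ.filter fun v =>
      Set.InjOn (f n v) (B r)).dens : ℝ)) l (nhds 1))
    (m : ∀ n, (V n → A) → ℝ) (hm : ∀ n, 0 ≤ m n) (hm1 : ∀ n, ∑ x, m n x = 1)
    (hf_law : ∀ r, ∀ δ > 0, Tendsto (fun n => ((Finset.univ.filter fun v =>
      δ < tvDist (lawOf (m n) fun x (i : B r) => x (f n v i)) (margM μ (B r))).dens : ℝ))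
      l (nhds 0)) :
    limsup (fun n => shEnt (m n) / (Fintype.card (V n) : ℝ)) l ≤ rootedHperc θ μ o :=
  ge_of_tendsto' (tendsto_percEnt_margM μ hθ o hB_root hB hB_cover) fun r =>
    limsup_shEnt_div_card_le_percEnt hm hm1 (f := fun n v i => f n v i) (fun n v => hf n v)
      (by
        convert hf_inj r
        exact Set.injOn_iff_injective.symm) (hf_law r)

/-- if the Gibbs measures `μ_n` on locally tree-like `d`-regular
graphs converge in the local weak* sense to the translation-invariant measure
`μ` on `A^{V(T_d)}` (the tree identified with the group `Γ`, with balls `B r`),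
then `limsup_n H(μ_n)/|V_n| ≤ H_perc(μ)`. -/
theorem limsup_entropy_le_Hperc {Γ A : Type*} [Group Γ] [Countable Γ]
    [Fintype A] [Nonempty A] [MeasurableSpace A] [MeasurableSingletonClass A]
    -- the balls of the tree `T_d`, identified with subsets of `Γ`
    (B : ℕ → Finset Γ) (hB1 : ∀ r, (1 : Γ) ∈ B r) (hBmono : Monotone B)
    (hBcover : (⋃ r, (B r : Set Γ)) = Set.univ)
    -- the limiting translation-invariant Gibbs measure on the tree
    (μ : Measure (Γ → A)) [IsProbabilityMeasure μ]
    (hinv : ∀ g : Γ, Measure.map (fun x : Γ → A => fun h => x (h * g)) μ = μ)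
    -- Bernoulli(p) site percolation on the tree
    (θ : ℝ → Measure (Γ → Bool)) (hθprob : ∀ p, IsProbabilityMeasure (θ p))
    (hθ : ∀ p ∈ Set.Icc (0:ℝ) 1, ∀ (T : Finset Γ) (g : Γ → Bool),
      θ p {x | ∀ i ∈ T, x i = g i} =
        ∏ i ∈ T, ENNReal.ofReal (if g i then p else 1 - p))
    -- the finite graphs, encoded by their vertex sets and homomorphisms
    (V : ℕ → Type*) [∀ n, Fintype (V n)] [∀ n, Nonempty (V n)]
    (γn : ∀ n, Γ →* Equiv.Perm (V n))
    -- local convergence to the tree: most `r`-balls are isomorphic to `B r`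
    (hlocal : ∀ r : ℕ, Tendsto (fun n =>
        ((Finset.univ.filter (fun v : V n =>
            Set.InjOn (fun g : Γ => (γn n) g v) (B r))).card : ℝ) /
          (Fintype.card (V n) : ℝ)) atTop (nhds 1))
    -- the Gibbs measures on the finite graphs
    (μn : ∀ n, (V n → A) → ℝ)
    (hpos : ∀ n x, 0 ≤ μn n x) (hsum : ∀ n, ∑ x, μn n x = 1)
    -- local weak* convergence `μ_n → μ`
    (hlw : ∀ (r : ℕ) (δ : ℝ), 0 < δ → Tendsto (fun n =>
        ((Finset.univ.filter (fun v : V n =>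
            δ < tvDist (pushName (B r) (γn n) (μn n) v) (margM μ (B r)))).card : ℝ) /
          (Fintype.card (V n) : ℝ)) atTop (nhds 0)) :
    limsup (fun n => shEnt (μn n) / (Fintype.card (V n) : ℝ)) atTop ≤
      Hperc θ μ := by
  refine limsup_entropy_le_Hperc_general 1 B hB1 hBmono hBcover μ θ hθ atTop V
    (fun n v g => γn n g v) (fun n v => by simp) ?_ μn hpos hsum ?_
  · simpa only [Finset.nnratCast_dens] using hlocal
  · simpa only [Finset.nnratCast_dens, pushName_eq_lawOf] using hlw
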